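/- Let r ≥ 1 and let i, j, k, l, m be integers with 1 ≤ j ≤ i ≤ r, 0 ≤ l ≤ r-1, m ≥ 0, 1 ≤ k ≤ mr+l, k + i < r + j, and i ≤ l + j ≤ k + i - 1. Then in ℚ(x_1,…,x_r) one has X(i,k) · X(j, mr+l) = X(j, mr+k+i-j) · X(i, l+j-i) + X(j, mr+i-j-1) · X(l+j+1, k+i-l-j-1). -/

import Mathlib

/-- The ambient field `ℚ(x_1, …, x_r)`, realized as the fraction field of the
polynomial ring over `ℚ` in variables indexed by `ZMod r` (so indices are
automatically read modulo `r`). -/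
noncomputable abbrev CyclicField (r : ℕ) : Type :=
  FractionRing (MvPolynomial (ZMod r) ℚ)

/-- The variable `x_i` for `i : ℤ`, with `x_{i+r} = x_i`. -/
noncomputable def xv (r : ℕ) (i : ℤ) : CyclicField r :=
  algebraMap (MvPolynomial (ZMod r) ℚ) (CyclicField r) (MvPolynomial.X (i : ZMod r))

/-- The generalized cluster variable `X(l, n)` (the image of the indecomposable
nilpotent representation `E_l[n]` under the Caldero–Chapoton map):
`X(l,0) = 1` and, for `n ≥ 1`,
`X(l,n) = x_{l+n}/x_l + Σ_{k=1}^{n-1} (x_{l+n}·x_{l+r-1})/(x_{l+k-1}·x_{l+k}) + x_{l+r-1}/x_{l+n-1}`. -/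
noncomputable def Xgcv (r : ℕ) (l : ℤ) : ℕ → CyclicField r
  | 0 => 1
  | n + 1 =>
      xv r (l + n + 1) / xv r l
        + ∑ k ∈ Finset.Icc 1 n,
            (xv r (l + n + 1) * xv r (l + r - 1)) / (xv r (l + k - 1) * xv r (l + k))
        + xv r (l + r - 1) / xv r (l + n)

/-!
Let `p` be a sequence with `p_{t+1} - p_t = 1 / (x_t x_{t+1})`. The sum defining `X(l, n)` is the
`2 × 2` minor of the vectors `(x_t, x_t p_t)` at `t = l - 1` and `t = l + n`. With `a = j - 1`,
`b = i - 1 + m r`, `c = l + j + m r` and `d = k + i + m r`, the multiplication formula is the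
three-term Plücker relation for the minors at `a ≤ b ≤ c ≤ d`, because translating both indices of
a minor by a multiple of `r` does not change it.
-/

theorem sum_Ico_add_sum_Ico {ι M : Type*} [LinearOrder ι] [LocallyFiniteOrder ι]
    [AddCommMonoid M] {a b c : ι} (hab : a ≤ b) (hbc : b ≤ c) (f : ι → M) :
    ∑ s ∈ Finset.Ico a b, f s + ∑ s ∈ Finset.Ico b c, f s = ∑ s ∈ Finset.Ico a c, f s := by
  rw [← Finset.sum_union (Finset.Ico_disjoint_Ico_consecutive a b c),
    Finset.Ico_union_Ico_eq_Ico hab hbc]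

theorem sum_Icc_one_eq_sum_Ico_int {M : Type*} [AddCommMonoid M] (f : ℤ → M) (l : ℤ) (n : ℕ) :
    ∑ k ∈ Finset.Icc 1 n, f (l + k - 1) = ∑ s ∈ Finset.Ico l (l + n), f s := by
  induction n with
  | zero => simp
  | succ n ih =>
    rw [Finset.sum_Icc_succ_top (by lia), ih, Nat.cast_succ, ← add_assoc l, add_sub_cancel_right,
      Finset.sum_Ico_add_eq_sum_Ico_add_one (by lia)]

section FriezeEntry

variable {K : Type*} [Semifield K] {x : ℤ → K}

/-- The entry at `(a, b)`, for `a ≤ b`, of the frieze pattern determined by the sequence `x`: the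
minor of the vectors `(x_t, x_t p_t)` at `a` and `b`, where `p_{t+1} - p_t = 1 / (x_t x_{t+1})`.
The minor is antisymmetric in `a` and `b`, whereas this encoding takes the value `0` for `b < a`. -/
noncomputable def friezeEntry (x : ℤ → K) (a b : ℤ) : K :=
  x a * x b * ∑ s ∈ Finset.Ico a b, (x s * x (s + 1))⁻¹

theorem friezeEntry_plucker (x : ℤ → K) {a b c d : ℤ} (hab : a ≤ b) (hbc : b ≤ c) (hcd : c ≤ d) :
    friezeEntry x a c * friezeEntry x b d =
      friezeEntry x a d * friezeEntry x b c + friezeEntry x a b * friezeEntry x c d := by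
  simp only [friezeEntry, ← sum_Ico_add_sum_Ico hab (hbc.trans hcd), ← sum_Ico_add_sum_Ico hab hbc,
    ← sum_Ico_add_sum_Ico hbc hcd]
  ring

theorem friezeEntry_add_period {p : ℤ} (hx : Function.Periodic x p) (a b : ℤ) :
    friezeEntry x (a + p) (b + p) = friezeEntry x a b := by
  simp only [friezeEntry, ← Finset.sum_Ico_add', add_right_comm _ p, hx _]

theorem friezeEntry_self_add_one {a : ℤ} (ha : x a ≠ 0) (ha' : x (a + 1) ≠ 0) :
    friezeEntry x a (a + 1) = 1 := by
  rw [friezeEntry, ← Finset.sum_Ico_add_eq_sum_Ico_add_one le_rfl, Finset.Ico_self,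
    Finset.sum_empty, zero_add, mul_inv_cancel₀ (mul_ne_zero ha ha')]

theorem friezeEntry_eq_sum {l : ℤ} {n : ℕ} (hleft : x (l - 1) ≠ 0) (hright : x (l + n + 1) ≠ 0) :
    friezeEntry x (l - 1) (l + n + 1) =
      x (l + n + 1) / x l
        + ∑ k ∈ Finset.Icc 1 n, x (l + n + 1) * x (l - 1) / (x (l + k - 1) * x (l + k))
        + x (l - 1) / x (l + n) := by
  have hsum : ∑ k ∈ Finset.Icc 1 n, (x (l + k - 1) * x (l + k))⁻¹ =
      ∑ s ∈ Finset.Ico l (l + n), (x s * x (s + 1))⁻¹ := by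
    simpa only [sub_add_cancel] using
      sum_Icc_one_eq_sum_Ico_int (fun s ↦ (x s * x (s + 1))⁻¹) l n
  have hsplit : ∑ s ∈ Finset.Ico (l - 1) (l + n + 1), (x s * x (s + 1))⁻¹ =
      (x (l - 1) * x l)⁻¹ + ∑ s ∈ Finset.Ico l (l + n), (x s * x (s + 1))⁻¹
        + (x (l + n) * x (l + n + 1))⁻¹ := by
    rw [← Finset.sum_Ico_add_eq_sum_Ico_add_one (by lia),
      ← Finset.insert_Ico_add_one_left_eq_Ico (by lia), Finset.sum_insert (by simp), sub_add_cancel]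
  simp only [div_eq_mul_inv]
  rw [← Finset.mul_sum, hsum, friezeEntry, hsplit]
  field_simp

end FriezeEntry

theorem xv_ne_zero (r : ℕ) (i : ℤ) : xv r i ≠ 0 :=
  IsFractionRing.to_map_ne_zero_of_mem_nonZeroDivisors
    (mem_nonZeroDivisors_of_ne_zero (MvPolynomial.X_ne_zero _))

theorem xv_periodic (r : ℕ) : Function.Periodic (xv r) r := fun i ↦ by simp [xv]

theorem Xgcv_eq_friezeEntry (r : ℕ) (l : ℤ) (n : ℕ) :
    Xgcv r l n = friezeEntry (xv r) (l - 1) (l + n) := by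
  cases n with
  | zero => simpa [Xgcv] using
      (friezeEntry_self_add_one (xv_ne_zero r (l - 1)) (xv_ne_zero r (l - 1 + 1))).symm
  | succ n =>
    have hlast : xv r (l + r - 1) = xv r (l - 1) := by
      rw [add_sub_right_comm, xv_periodic r]
    rw [Xgcv, hlast, Nat.cast_succ, ← add_assoc,
      friezeEntry_eq_sum (xv_ne_zero r _) (xv_ne_zero r _)]

theorem Xgcv_toNat_eq_friezeEntry {r : ℕ} {l n : ℤ} (hn : 0 ≤ n) (q : ℤ) {a b : ℤ}
    (ha : a = l - 1 + q * r) (hb : b = l + n + q * r) :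
    Xgcv r l n.toNat = friezeEntry (xv r) a b := by
  rw [ha, hb, ← smul_eq_mul, friezeEntry_add_period ((xv_periodic r).zsmul q), Xgcv_eq_friezeEntry,
    Int.toNat_of_nonneg hn]

theorem stmt4_general (r : ℕ) (i j k l m : ℤ)
    (hij : j + 1 ≤ m * r + i) (hlj1 : i ≤ l + j) (hlj2 : l + j ≤ k + i - 1) :
    Xgcv r i k.toNat * Xgcv r j (m * r + l).toNat =
      Xgcv r j (m * r + k + i - j).toNat * Xgcv r i (l + j - i).toNat
        + Xgcv r j (m * r + i - j - 1).toNat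
            * Xgcv r (l + j + 1) (k + i - l - j - 1).toNat := by
  obtain ⟨a, ha⟩ : ∃ a, a = j - 1 := ⟨_, rfl⟩
  obtain ⟨b, hb⟩ : ∃ b, b = i - 1 + m * r := ⟨_, rfl⟩
  obtain ⟨c, hc⟩ : ∃ c, c = l + j + m * r := ⟨_, rfl⟩
  obtain ⟨d, hd⟩ : ∃ d, d = k + i + m * r := ⟨_, rfl⟩
  have hbd : Xgcv r i k.toNat = friezeEntry (xv r) b d :=
    Xgcv_toNat_eq_friezeEntry (by lia) m (by lia) (by lia)
  have hac : Xgcv r j (m * r + l).toNat = friezeEntry (xv r) a c :=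
    Xgcv_toNat_eq_friezeEntry (by lia) 0 (by lia) (by lia)
  have had : Xgcv r j (m * r + k + i - j).toNat = friezeEntry (xv r) a d :=
    Xgcv_toNat_eq_friezeEntry (by lia) 0 (by lia) (by lia)
  have hbc : Xgcv r i (l + j - i).toNat = friezeEntry (xv r) b c :=
    Xgcv_toNat_eq_friezeEntry (by lia) m (by lia) (by lia)
  have hab : Xgcv r j (m * r + i - j - 1).toNat = friezeEntry (xv r) a b :=
    Xgcv_toNat_eq_friezeEntry (by lia) 0 (by lia) (by lia)
  have hcd : Xgcv r (l + j + 1) (k + i - l - j - 1).toNat = friezeEntry (xv r) c d :=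
    Xgcv_toNat_eq_friezeEntry (by lia) m (by lia) (by lia)
  rw [hbd, hac, had, hbc, hab, hcd, mul_comm (friezeEntry (xv r) b d)]
  exact friezeEntry_plucker (xv r) (by lia) (by lia) (by lia)

/-- inductive multiplication formula, case `j ≤ i`, `k + i < r + j`,
`i ≤ l + j ≤ k + i - 1`. -/
theorem stmt4 (r : ℕ) (hr : 1 ≤ r) (i j k l m : ℤ)
    (hj : 1 ≤ j) (hji : j ≤ i) (hi : i ≤ r)
    (hl0 : 0 ≤ l) (hl : l ≤ (r : ℤ) - 1) (hm : 0 ≤ m)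
    (hk1 : 1 ≤ k) (hk2 : k ≤ m * r + l)
    (hki : k + i < r + j) (hlj1 : i ≤ l + j) (hlj2 : l + j ≤ k + i - 1) :
    Xgcv r i k.toNat * Xgcv r j (m * r + l).toNat =
      Xgcv r j (m * r + k + i - j).toNat * Xgcv r i (l + j - i).toNat
        + Xgcv r j (m * r + i - j - 1).toNat
            * Xgcv r (l + j + 1) (k + i - l - j - 1).toNat :=
  stmt4_general r i j k l m (by linarith) hlj1 hlj2
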